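/- arXiv:1211.0639 — 4 statements merged into one kernel-verified Lean document; each statement's English description precedes it below -/
import Mathlib

section
/- Let n ≥ 2 and let α_1, …, α_n be complex numbers that are algebraic over ℚ. Assume that the functions z ↦ exp(α_1 z), …, z ↦ exp(α_n z), considered as elements of the ℚ-algebra of all functions ℂ → ℂ with pointwise operations, are algebraically independent over ℚ. Then for every nonzero complex number β that is algebraic over ℚ, the complex numbers exp(α_1 β), …, exp(α_n β) are algebraically independent over ℚ. -/
/-!
Clearing denominators and multiplying by Galois conjugates reduces the linear independence of the
exponentials of algebraic numbers to the non-vanishing of Galois-invariant integral combinations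
`c₀ + ∑ cₖ exp k` with `c₀ ≠ 0`. Hermite's method produces, for each large prime `p`, an integer
`n` prime to `p` and an integral polynomial `g` such that every `n * exp k - p * g(k)` is tiny.
Were the combination zero, `n * c₀ + p * ∑ cₖ g(k)` would be tiny too; but Galois invariance makes
it, up to a power of a fixed denominator, a rational integer not divisible by `p`.

A monomial in the numbers `exp (γ i)` is the exponential of a combination of the `γ i` with natural
coefficients, so their algebraic independence is the linear independence of these monomials.
-/

section Hermite

open Polynomial Filter Topology
open scoped Nat

theorem tendsto_pow_div_factorial_pred_atTop (A : ℝ) :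
    Tendsto (fun p : ℕ ↦ A ^ p / (p - 1)!) atTop (𝓝 0) := by
  rw [← tendsto_add_atTop_iff_nat 1]
  simpa [pow_succ, mul_div_right_comm] using
    (FloorSemiring.tendsto_pow_div_factorial_atTop A).mul_const A

theorem exists_prime_norm_sum_exp_sub_aeval_lt_one {ι : Type*} {f : ℤ[X]} (hf : f.eval 0 ≠ 0)
    (s : Finset ι) (r c : ι → ℂ) (hr : ∀ i ∈ s, aeval (r i) f = 0) (M : ℕ) :
    ∃ p : ℕ, M < p ∧ p.Prime ∧ ∃ n : ℤ, ¬ (p : ℤ) ∣ n ∧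
      ∃ g : ℤ[X], g.natDegree ≤ p * f.natDegree ∧
        ‖(f.leadingCoeff : ℂ) ^ (p * f.natDegree) *
          ∑ i ∈ s, c i * (n * Complex.exp (r i) - p * aeval (r i) g)‖ < 1 := by
  obtain ⟨C, hC⟩ := LindemannWeierstrass.exp_polynomial_approx f hf
  set L : ℝ := ‖(f.leadingCoeff : ℂ)‖ ^ f.natDegree with hL
  set W : ℝ := ∑ i ∈ s, ‖c i‖
  have hsmall : ∀ᶠ p : ℕ in atTop, W * ((L * C) ^ p / (p - 1)!) < 1 := by
    refine Tendsto.eventually_lt_const one_pos ?_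
    simpa using (tendsto_pow_div_factorial_pred_atTop (L * C)).const_mul W
  obtain ⟨p, hp, hpW, hpM, hpf⟩ := (Nat.frequently_atTop_iff_infinite.2
    Nat.infinite_setOfPred_prime).and_eventually (hsmall.and
      ((eventually_gt_atTop M).and (eventually_gt_atTop (f.eval 0).natAbs))) |>.exists
  obtain ⟨n, hn, g, hg, happrox⟩ := hC p hpf hp
  refine ⟨p, hpM, hp, n, hn, g, hg.trans (Nat.sub_le _ _), ?_⟩
  have hf0 : f ≠ 0 := by rintro rfl; simp at hf
  have hterm : ∀ i ∈ s, ‖c i * (n * Complex.exp (r i) - p * aeval (r i) g)‖ ≤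
      ‖c i‖ * (C ^ p / (p - 1)!) := fun i hi ↦ by
    rw [norm_mul]
    gcongr
    simpa using happrox (mem_aroots.2 ⟨hf0, hr i hi⟩)
  calc ‖(f.leadingCoeff : ℂ) ^ (p * f.natDegree) *
          ∑ i ∈ s, c i * (n * Complex.exp (r i) - p * aeval (r i) g)‖
      ≤ L ^ p * (W * (C ^ p / (p - 1)!)) := by
        rw [norm_mul, norm_pow, hL, ← pow_mul, mul_comm p, Finset.sum_mul]
        gcongr
        exact norm_sum_le_of_le s hterm
    _ = W * ((L * C) ^ p / (p - 1)!) := by ring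
    _ < 1 := hpW

theorem add_sum_mul_exp_ne_zero {ι : Type*} {f : ℤ[X]} (hf : f.eval 0 ≠ 0)
    {s : Finset ι} {r c : ι → ℂ} (hr : ∀ i ∈ s, aeval (r i) f = 0)
    (hint : ∀ (g : ℤ[X]) (N : ℕ), g.natDegree ≤ N →
      ∃ T : ℤ, (T : ℂ) = f.leadingCoeff ^ N * ∑ i ∈ s, c i * aeval (r i) g)
    {c₀ : ℤ} (hc₀ : c₀ ≠ 0) :
    c₀ + ∑ i ∈ s, c i * Complex.exp (r i) ≠ 0 := by
  intro hsum
  have hlc : f.leadingCoeff ≠ 0 := leadingCoeff_ne_zero.2 <| by rintro rfl; simp at hf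
  obtain ⟨p, hpM, hp, n, hpn, g, hg, hlt⟩ := exists_prime_norm_sum_exp_sub_aeval_lt_one hf s r c hr
    (f.leadingCoeff * c₀).natAbs
  obtain ⟨T, hT⟩ := hint g _ hg
  set m := f.leadingCoeff
  set N := p * f.natDegree
  have hcast : ((m ^ N * (n * c₀) + p * T : ℤ) : ℂ) =
      -(m ^ N * ∑ i ∈ s, c i * (n * Complex.exp (r i) - p * aeval (r i) g)) := by
    have hsplit : ∑ i ∈ s, c i * (n * Complex.exp (r i) - p * aeval (r i) g) =
        n * ∑ i ∈ s, c i * Complex.exp (r i) - p * ∑ i ∈ s, c i * aeval (r i) g := by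
      simp only [Finset.mul_sum, ← Finset.sum_sub_distrib]
      exact Finset.sum_congr rfl fun i _ ↦ by ring
    push_cast
    rw [hsplit, hT, eq_neg_of_add_eq_zero_right hsum]
    ring
  have hzero : m ^ N * (n * c₀) + p * T = 0 := by
    rw [← norm_neg, ← hcast, Complex.norm_intCast] at hlt
    exact Int.abs_lt_one_iff.1 (mod_cast hlt)
  have hprime : Prime (p : ℤ) := Nat.prime_iff_prime_int.1 hp
  have hndvd : ¬ (p : ℤ) ∣ m * c₀ := fun h ↦ mul_ne_zero hlc hc₀ <|
    Int.eq_zero_of_dvd_of_natAbs_lt_natAbs h hpM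
  have hdvd : (p : ℤ) ∣ m ^ N * (n * c₀) :=
    (Int.dvd_add_left (dvd_mul_right (p : ℤ) T)).1 (hzero ▸ dvd_zero _)
  rcases hprime.dvd_or_dvd hdvd with h | h
  · exact hndvd (dvd_mul_of_dvd_left (hprime.dvd_of_dvd_pow h) _)
  · rcases hprime.dvd_or_dvd h with h | h
    · exact hpn h
    · exact hndvd (dvd_mul_of_dvd_right h _)

end Hermite

section Integrality

open Polynomial

theorem exists_eval_zero_ne_zero_and_aeval_eq_zero {R A : Type*} [CommRing R] [IsDomain R]
    [CommRing A] [Algebra R A] (s : Finset A) (halg : ∀ a ∈ s, IsAlgebraic R a)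
    (hs : ∀ a ∈ s, a ∈ nonZeroDivisors A) :
    ∃ f : R[X], f.eval 0 ≠ 0 ∧ ∀ a ∈ s, aeval a f = 0 := by
  have hex : ∀ a ∈ s, ∃ q : R[X], q.coeff 0 ≠ 0 ∧ aeval a q = 0 := fun a ha ↦
    (halg a ha).exists_nonzero_coeff_and_aeval_eq_zero (hs a ha)
  choose! q hq₀ hq using hex
  refine ⟨∏ a ∈ s, q a, ?_, fun a ha ↦ ?_⟩
  · rw [eval_prod]
    exact Finset.prod_ne_zero_iff.2 fun a ha ↦ by simpa [coeff_zero_eq_eval_zero] using hq₀ a ha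
  · rw [map_prod]
    exact Finset.prod_eq_zero ha (hq a ha)

theorem isIntegral_leadingCoeff_pow_smul_aeval {R A : Type*} [CommRing R] [CommRing A]
    [Algebra R A] {f g : R[X]} {a : A} (ha : aeval a f = 0) {N : ℕ} (hN : g.natDegree ≤ N) :
    IsIntegral R (f.leadingCoeff ^ N • aeval a g) := by
  rw [aeval_eq_sum_range' (Nat.lt_succ_of_le hN), Finset.smul_sum]
  refine IsIntegral.sum _ fun i hi ↦ ?_
  have hiN : i ≤ N := Finset.mem_range_succ_iff.1 hi
  have hterm : f.leadingCoeff ^ N • g.coeff i • a ^ i =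
      (f.leadingCoeff ^ (N - i) * g.coeff i) • (f.leadingCoeff • a) ^ i := by
    rw [_root_.smul_pow, smul_smul, smul_smul, ← pow_sub_mul_pow _ hiN]
    ring_nf
  rw [hterm]
  exact ((isIntegral_leadingCoeff_smul f a ha).pow i).smul _

theorem exists_algebraMap_eq_of_isIntegral_of_galois_fixed (R F : Type*) {K : Type*} [CommRing R]
    [IsIntegrallyClosed R] [Field F] [Algebra R F] [IsFractionRing R F] [Field K] [Algebra F K]
    [Algebra R K] [IsScalarTower R F K] [IsGalois F K] {x : K} (hx : IsIntegral R x)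
    (hfix : ∀ σ : Gal(K/F), σ x = x) : ∃ t : R, algebraMap R K t = x := by
  obtain ⟨y, rfl⟩ := (InfiniteGalois.mem_range_algebraMap_iff_fixed x).2 hfix
  obtain ⟨t, rfl⟩ := IsIntegrallyClosed.isIntegral_iff.1
    ((isIntegral_algebraMap_iff (algebraMap F K).injective).1 hx)
  exact ⟨t, IsScalarTower.algebraMap_apply R F K t⟩

variable {K : Type*} [Field K] [Algebra ℚ K]

theorem galois_map_sum_intCast_mul_aeval {c : K →₀ ℤ} {σ : Gal(K/ℚ)} (hσ : ∀ k, c (σ k) = c k)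
    (g : ℤ[X]) :
    σ (c.sum fun k n ↦ n * aeval k g) = c.sum fun k n ↦ n * aeval k g := by
  rw [map_finsuppSum]
  refine Finset.sum_equiv σ.toEquiv (fun k ↦ by simp [hσ]) fun k _ ↦ ?_
  simpa [hσ] using Or.inl (aeval_algHom_apply (σ.toAlgHom.restrictScalars ℤ) k g).symm

theorem exists_intCast_eq_leadingCoeff_pow_mul_sum_aeval [IsGalois ℚ K] {c : K →₀ ℤ}
    (hinv : ∀ (σ : Gal(K/ℚ)) (k : K), c (σ k) = c k) {f g : ℤ[X]}
    (hf : ∀ k ∈ c.support, aeval k f = 0) {N : ℕ} (hN : g.natDegree ≤ N) :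
    ∃ T : ℤ, (T : K) = f.leadingCoeff ^ N * c.sum fun k n ↦ n * aeval k g := by
  have hint : IsIntegral ℤ ((f.leadingCoeff : K) ^ N * c.sum fun k n ↦ n * aeval k g) := by
    rw [Finsupp.mul_sum]
    refine IsIntegral.sum _ fun k hk ↦ ?_
    simpa [mul_left_comm] using (isIntegral_leadingCoeff_pow_smul_aeval (hf k hk) hN).smul (c k)
  exact exists_algebraMap_eq_of_isIntegral_of_galois_fixed ℤ ℚ hint fun σ ↦ by
    rw [map_mul, map_pow, map_intCast, galois_map_sum_intCast_mul_aeval (hinv σ)]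

end Integrality

section GroupAlgebra

open scoped AddMonoidAlgebra

variable (R : Type*) {A G : Type*} [CommSemiring R] [AddCommGroup A] [Group G]
  [DistribMulAction G A]

/-- The automorphism of the group algebra `R[A]` through which `g : G` acts on exponents, sending
`single a r` to `single (g • a) r`. -/
noncomputable def exponentAut (g : G) : R[A] ≃ₐ[R] R[A] :=
  AddMonoidAlgebra.domCongr R R (DistribMulAction.toAddEquiv A g)

variable {R}

theorem exponentAut_single (g : G) (a : A) (r : R) :
    exponentAut R g (.single a r) = .single (g • a) r :=
  AddMonoidAlgebra.domCongr_single ..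

theorem coeff_exponentAut_smul (g : G) (x : R[A]) (a : A) :
    (exponentAut R g x).coeff (g • a) = x.coeff a := by
  simp [exponentAut]

theorem exponentAut_one (x : R[A]) : exponentAut R (1 : G) x = x := by
  ext a
  simpa using coeff_exponentAut_smul (1 : G) x a

theorem exponentAut_exponentAut (g h : G) (x : R[A]) :
    exponentAut R g (exponentAut R h x) = exponentAut R (g * h) x := by
  ext a
  simp [exponentAut, mul_smul]

theorem exponentAut_prod_exponentAut [Fintype G] (g : G) (x : R[A]) :
    exponentAut R g (∏ h : G, exponentAut R h x) = ∏ h : G, exponentAut R h x := by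
  rw [map_prod]
  exact Fintype.prod_equiv (Equiv.mulLeft g) _ _ fun h ↦ exponentAut_exponentAut g h x

theorem exponentAut_sum_exponentAut [Fintype G] (g : G) (x : R[A]) :
    exponentAut R g (∑ h : G, exponentAut R h x) = ∑ h : G, exponentAut R h x := by
  rw [map_sum]
  exact Fintype.sum_equiv (Equiv.mulLeft g) _ _ fun h ↦ exponentAut_exponentAut g h x

theorem coeff_zero_mul_sum_exponentAut_single [Fintype G] {y : R[A]}
    (hy : ∀ g : G, exponentAut R g y = y) (a : A) :
    (y * ∑ g : G, exponentAut R g (.single (-a) 1)).coeff 0 = Fintype.card G * y.coeff a := by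
  have hterm (g : G) : (y * exponentAut R g (.single (-a) 1)).coeff 0 = y.coeff a := by
    rw [exponentAut_single, AddMonoidAlgebra.coeff_mul_single_eq_coeff_mul (m₂ := g • a), mul_one,
      ← coeff_exponentAut_smul g y a, hy g]
    simp [add_neg_eq_zero]
  simp [Finset.mul_sum, AddMonoidAlgebra.coeff_sum, Finsupp.finsetSum_apply, hterm]

theorem exists_dvd_exponentAut_invariant_coeff_zero_ne_zero [Finite G] [NoZeroDivisors R]
    [CharZero R] [UniqueSums A] {x : R[A]} (hx : x ≠ 0) :
    ∃ y : R[A], x ∣ y ∧ (∀ g : G, exponentAut R g y = y) ∧ y.coeff 0 ≠ 0 := by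
  have := Fintype.ofFinite G
  set y : R[A] := ∏ g : G, exponentAut R g x
  have hxy : x ∣ y := by
    simpa [exponentAut_one] using
      Finset.dvd_prod_of_mem (fun g : G ↦ exponentAut R g x) (Finset.mem_univ 1)
  have hy : y ≠ 0 := Finset.prod_ne_zero_iff.2 fun g _ ↦ by simpa using hx
  have hyinv : ∀ g : G, exponentAut R g y = y := fun g ↦ exponentAut_prod_exponentAut g x
  obtain ⟨a, ha⟩ : ∃ a, y.coeff a ≠ 0 := by
    by_contra! h
    exact hy (by ext a; simpa using h a)
  -- The conjugates of `single (-a) 1` shift the coefficient at `a` to `0` and keep the invariance.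
  refine ⟨y * ∑ g : G, exponentAut R g (.single (-a) 1), hxy.mul_right _, fun g ↦ ?_, ?_⟩
  · rw [map_mul, hyinv, exponentAut_sum_exponentAut]
  · rw [coeff_zero_mul_sum_exponentAut_single hyinv]
    exact mul_ne_zero (mod_cast Fintype.card_ne_zero) ha

end GroupAlgebra

section LinearIndependence

open Polynomial
open scoped AddMonoidAlgebra

/-- Evaluation of formal integral combinations of exponentials: the ring homomorphism `ℤ[A] → ℂ`
extending `a ↦ exp (φ a)`. -/
noncomputable def cexpEval {A : Type*} [AddCommMonoid A] (φ : A →+ ℂ) : ℤ[A] →ₐ[ℤ] ℂ :=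
  AddMonoidAlgebra.lift ℤ ℂ A (Complex.expMonoidHom.comp φ.toMultiplicative)

theorem cexpEval_apply {A : Type*} [AddCommMonoid A] (φ : A →+ ℂ) (x : ℤ[A]) :
    cexpEval φ x = x.coeff.sum fun a n ↦ n * Complex.exp (φ a) := by
  simp [cexpEval, AddMonoidAlgebra.lift_apply]

variable {K : Type*} [Field K] [Algebra ℚ K] [IsGalois ℚ K]

theorem cexpEval_ne_zero_of_invariant (φ : K →+* ℂ) {x : ℤ[K]}
    (hinv : ∀ σ : Gal(K/ℚ), exponentAut ℤ σ x = x) (hx : x.coeff 0 ≠ 0) :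
    cexpEval (φ : K →+ ℂ) x ≠ 0 := by
  set c : K →₀ ℤ := x.coeff.erase 0
  have hcinv (σ : Gal(K/ℚ)) (k : K) : c (σ k) = c k := by
    have hxσ : x.coeff (σ k) = x.coeff k := by simpa [hinv] using coeff_exponentAut_smul σ x k
    classical simp [c, Finsupp.erase_apply, hxσ]
  have halg : ∀ k ∈ c.support, IsAlgebraic ℤ k := fun k _ ↦
    (IsFractionRing.isAlgebraic_iff ℤ ℚ K).2 (Algebra.IsAlgebraic.isAlgebraic k)
  obtain ⟨f, hf₀, hf⟩ := exists_eval_zero_ne_zero_and_aeval_eq_zero c.support halg fun k hk ↦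
    mem_nonZeroDivisors_of_ne_zero (by rintro rfl; simp [c] at hk)
  have hφ (k : K) (g : ℤ[X]) : aeval (φ k) g = φ (aeval k g) :=
    aeval_algHom_apply φ.toIntAlgHom k g
  rw [cexpEval_apply, ← Finsupp.add_sum_erase' _ 0 _ (by simp)]
  simp only [map_zero, Complex.exp_zero, mul_one]
  refine add_sum_mul_exp_ne_zero hf₀ (fun k hk ↦ ?_) (fun g N hN ↦ ?_) hx
  · exact (hφ k f).trans (by rw [hf k hk, map_zero])
  · obtain ⟨T, hT⟩ := exists_intCast_eq_leadingCoeff_pow_mul_sum_aeval hcinv hf hN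
    refine ⟨T, ?_⟩
    simpa [Finsupp.sum, hφ] using congrArg φ hT

theorem linearIndependent_cexp_of_finite_isGalois [FiniteDimensional ℚ K] (φ : K →+* ℂ) :
    LinearIndependent ℚ fun k ↦ Complex.exp (φ k) := by
  rw [← LinearIndependent.iff_fractionRing ℤ ℚ, linearIndependent_iff]
  intro l hl
  by_contra hne
  have hx : AddMonoidAlgebra.ofCoeff l ≠ 0 := fun h ↦ hne (congrArg AddMonoidAlgebra.coeff h)
  have hEx : cexpEval (φ : K →+ ℂ) (.ofCoeff l) = 0 := by
    simpa [cexpEval_apply, Finsupp.linearCombination_apply] using hl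
  obtain ⟨y, hxy, hyinv, hy₀⟩ :=
    exists_dvd_exponentAut_invariant_coeff_zero_ne_zero (G := Gal(K/ℚ)) hx
  exact cexpEval_ne_zero_of_invariant φ hyinv hy₀ <|
    zero_dvd_iff.1 (hEx ▸ map_dvd (cexpEval (φ : K →+ ℂ)) hxy)

theorem linearIndependent_cexp_of_isGalois (φ : K →+* ℂ) :
    LinearIndependent ℚ fun k ↦ Complex.exp (φ k) := by
  rw [linearIndependent_iff_finset_linearIndependent]
  intro s
  let L := FiniteGaloisIntermediateField.adjoin ℚ (s : Set K)
  have hsL : (s : Set K) ⊆ L.toIntermediateField := FiniteGaloisIntermediateField.subset_adjoin ℚ _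
  -- Otherwise instance search finds the `ℚ`-algebra structure that `L` has as a division ring.
  let _ : Algebra ℚ L := L.algebra'
  exact (linearIndependent_cexp_of_finite_isGalois (φ.comp (algebraMap L K))).comp
    (Set.inclusion hsL) (Set.inclusion_injective hsL)

theorem linearIndependent_cexp {ι : Type*} {γ : ι → ℂ} (hγ : Function.Injective γ)
    (halg : ∀ i, IsAlgebraic ℚ (γ i)) : LinearIndependent ℚ fun i ↦ Complex.exp (γ i) := by
  have : IsAlgClosure ℚ (algebraicClosure ℚ ℂ) := algebraicClosure.isAlgClosure ℚ ℂ
  have : IsGalois ℚ (algebraicClosure ℚ ℂ) :=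
    isGalois_iff.2 ⟨inferInstance, IsAlgClosure.normal ℚ _⟩
  exact (linearIndependent_cexp_of_isGalois (algebraMap (algebraicClosure ℚ ℂ) ℂ)).comp
    (fun i ↦ ⟨γ i, mem_algebraicClosure_iff.2 (halg i)⟩) fun i j h ↦ hγ (congrArg Subtype.val h)

end LinearIndependence

section AlgebraicIndependence

theorem algebraicIndependent_iff_linearIndependent_prod_pow {ι R A : Type*} [CommRing R]
    [CommRing A] [Algebra R A] {x : ι → A} :
    AlgebraicIndependent R x ↔
      LinearIndependent R fun e : ι →₀ ℕ ↦ e.prod fun i k ↦ x i ^ k := by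
  have hcomb : (Finsupp.linearCombination R fun e : ι →₀ ℕ ↦ e.prod fun i k ↦ x i ^ k) =
      (MvPolynomial.aeval x).toLinearMap ∘ₗ (MvPolynomial.basisMonomials ι R).repr.symm := by
    ext e
    simp [MvPolynomial.aeval_monomial]
  rw [AlgebraicIndependent, LinearIndependent, hcomb]
  exact (EquivLike.injective_comp (MvPolynomial.basisMonomials ι R).repr.symm _).symm

theorem prod_cexp_pow {ι : Type*} (γ : ι → ℂ) (e : ι →₀ ℕ) :
    (e.prod fun i k ↦ Complex.exp (γ i) ^ k) =
      Complex.exp (Finsupp.linearCombination ℕ γ e) := by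
  simp [Finsupp.prod, Finsupp.linearCombination_apply, Finsupp.sum, Complex.exp_sum,
    Complex.exp_nat_mul]

-- Linear independence over `ℕ` is injectivity of the map from exponents to combinations; for
-- complex numbers it amounts to linear independence over `ℚ`.
theorem algebraicIndependent_cexp {ι : Type*} {γ : ι → ℂ} (halg : ∀ i, IsAlgebraic ℚ (γ i))
    (hγ : LinearIndependent ℕ γ) : AlgebraicIndependent ℚ fun i ↦ Complex.exp (γ i) := by
  rw [algebraicIndependent_iff_linearIndependent_prod_pow]
  simp only [prod_cexp_pow]
  refine linearIndependent_cexp hγ fun e ↦ ?_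
  rw [Finsupp.linearCombination_apply]
  exact mem_algebraicClosure_iff.1 <| sum_mem fun i _ ↦
    nsmul_mem (mem_algebraicClosure_iff.2 (halg i)) _

theorem linearIndependent_nat_of_algebraicIndependent_cexp_mul {ι : Type*} {α : ι → ℂ}
    (hind : AlgebraicIndependent ℚ fun i (z : ℂ) ↦ Complex.exp (α i * z)) :
    LinearIndependent ℕ α := by
  have hinj := (algebraicIndependent_iff_linearIndependent_prod_pow.1 hind).injective
  refine fun e e' h ↦ hinj (funext fun z ↦ ?_)
  have hmonomial (e : ι →₀ ℕ) : (e.prod fun i k ↦ (fun z ↦ Complex.exp (α i * z)) ^ k) z =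
      Complex.exp (Finsupp.linearCombination ℕ α e * z) := by
    simpa [Finsupp.prod, Finsupp.linearCombination_apply, Finsupp.sum, Finset.sum_mul, mul_assoc]
      using prod_cexp_pow (fun i ↦ α i * z) e
  exact (hmonomial e).trans (h ▸ (hmonomial e').symm)

end AlgebraicIndependence

theorem lindemann_weierstrass_general {ι : Type*} {α : ι → ℂ} {β : ℂ}
    (hind : AlgebraicIndependent ℚ fun i (z : ℂ) ↦ Complex.exp (α i * z)) (hβ : β ≠ 0)
    (halg : ∀ i, IsAlgebraic ℚ (α i * β)) :
    AlgebraicIndependent ℚ fun i ↦ Complex.exp (α i * β) :=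
  algebraicIndependent_cexp halg <|
    (linearIndependent_nat_of_algebraicIndependent_cexp_mul hind).map_injOn
      (LinearMap.mulRight ℕ β) (mul_left_injective₀ hβ).injOn

/-- **Lindemann–Weierstrass theorem** (as stated in the paper).
If `α 1, …, α n` (`n ≥ 2`) are algebraic complex numbers such that the functions
`z ↦ exp (α i * z)` are algebraically independent over `ℚ` (in the `ℚ`-algebra `ℂ → ℂ`
of all functions with pointwise operations), then for every nonzero algebraic `β` the
numbers `exp (α 1 * β), …, exp (α n * β)` are algebraically independent over `ℚ`. -/
theorem lindemann_weierstrass (n : ℕ) (hn : 2 ≤ n) (α : Fin n → ℂ)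
    (halg : ∀ i, IsAlgebraic ℚ (α i))
    (hind : AlgebraicIndependent ℚ (fun i : Fin n => fun z : ℂ => Complex.exp (α i * z)))
    (β : ℂ) (hβ : β ≠ 0) (hβalg : IsAlgebraic ℚ β) :
    AlgebraicIndependent ℚ (fun i : Fin n => Complex.exp (α i * β)) :=
  lindemann_weierstrass_general hind hβ fun i ↦ (halg i).mul hβalg
end

section
/- Let 𝕜 be a field, n ≥ 1, and f_1, …, f_n ∈ 𝕜[[z]] formal power series. For all X, Y ∈ ℕ there exists a nonzero polynomial Q ∈ 𝕜[Z, X_1, …, X_n] with deg_Z Q ≤ X, total degree of Q in the variables X_1, …, X_n at most Y, and ord_{z=0} Q(z, f_1(z), …, f_n(z)) ≥ (X+1)·binom(Y+n, n) − 1 (order taken in ℕ ∪ {∞}). Since (X+1)·binom(Y+n, n) ≥ (X+1)(Y+1)^n/n!, this order is in particular > (X+1)(Y+1)^n/n! − 2. -/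
/-!
The conditions `coeff i (Q(z, f₁(z), …, fₙ(z))) = 0` for `i < k` are `k` homogeneous linear
equations in the coefficients of `Q`. The admissible `Q` form a free module of rank
`(X+1)·C(Y+n, n)`, and a homogeneous linear system with fewer equations than unknowns has a nonzero
solution, over any nontrivial commutative ring.
-/

open scoped BigOperators

/-- Total degree of `P ∈ 𝕜[Z, X₁, …, Xₙ]` (variables indexed by `Fin (n+1)`, where
`0` is the variable `Z` and `Fin.succ i` is the variable `Xᵢ`) in the variables
`X₁, …, Xₙ` only. -/
noncomputable def degInX {𝕜 : Type*} [CommRing 𝕜] {n : ℕ}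
    (P : MvPolynomial (Fin (n + 1)) 𝕜) : ℕ :=
  P.support.sup fun d => ∑ i : Fin n, d i.succ

open Finset Module MvPolynomial
open scoped PowerSeries

theorem exists_ne_zero_le_order_of_lt_finrank {R M : Type*} [Ring R] [StrongRankCondition R]
    [AddCommGroup M] [Module R M] (φ : M →ₗ[R] R⟦X⟧) {k : ℕ} (hk : k < finrank R M) :
    ∃ v ≠ 0, (k : ℕ∞) ≤ (φ v).order := by
  let firstCoeffs : M →ₗ[R] Fin k → R := LinearMap.pi fun i ↦ PowerSeries.coeff (i : ℕ) ∘ₗ φ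
  have not_injective : ¬ Function.Injective firstCoeffs := fun h ↦
    hk.not_ge (by simpa using LinearMap.finrank_le_finrank_of_injective h)
  rw [← LinearMap.ker_eq_bot, ← ne_eq, Submodule.ne_bot_iff] at not_injective
  obtain ⟨v, hv, hv0⟩ := not_injective
  exact ⟨v, hv0, PowerSeries.nat_le_order _ _ fun i hi ↦ congrFun hv ⟨i, hi⟩⟩

theorem finrank_restrictSupport {σ R : Type*} [CommSemiring R] [StrongRankCondition R]
    (s : Set (σ →₀ ℕ)) : finrank R (restrictSupport R s) = s.ncard :=
  finrank_eq_nat_card_basis (basisRestrictSupport R s)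

theorem ncard_setOf_degree_le {σ : Type*} [Fintype σ] (k : ℕ) :
    {d : σ →₀ ℕ | d.degree ≤ k}.ncard = (k + Fintype.card σ).choose (Fintype.card σ) := by
  classical
  have eq_biUnion : {d : σ →₀ ℕ | d.degree ≤ k} =
      ((range (k + 1)).biUnion (univ.finsuppAntidiag ·) : Finset (σ →₀ ℕ)) := by
    ext d
    simp [Finsupp.degree_eq_sum]
  have disjoint : Set.PairwiseDisjoint (range (k + 1) : Set ℕ)
      (univ.finsuppAntidiag · : ℕ → Finset (σ →₀ ℕ)) := fun i _ j _ hij ↦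
    Finset.disjoint_left.mpr fun d hi hj ↦
      hij ((mem_finsuppAntidiag.mp hi).1.symm.trans (mem_finsuppAntidiag.mp hj).1)
  rw [eq_biUnion, Set.ncard_coe_finset, card_biUnion disjoint]
  simp only [card_finsuppAntidiag_nat_eq_multichoose, card_univ, Nat.sum_range_multichoose]

/-- The polynomials in `R[Z, X₁, …, Xₙ]` of degree at most `a` in `Z` and of total degree at most
`b` in `X₁, …, Xₙ`, with the variables indexed as in `degInX`. -/
noncomputable def restrictBidegree (R : Type*) [CommSemiring R] (n a b : ℕ) :
    Submodule R (MvPolynomial (Fin (n + 1)) R) :=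
  restrictSupport R {d | d 0 ≤ a ∧ ∑ i : Fin n, d i.succ ≤ b}

theorem mem_restrictBidegree {R : Type*} [CommRing R] {n a b : ℕ}
    {P : MvPolynomial (Fin (n + 1)) R} :
    P ∈ restrictBidegree R n a b ↔ P.degreeOf 0 ≤ a ∧ degInX P ≤ b := by
  rw [restrictBidegree, mem_restrictSupport_iff, degreeOf_le_iff, degInX, Finset.sup_le_iff,
    ← forall₂_and]
  rfl

theorem ncard_setOf_bidegree_le (n a b : ℕ) :
    {d : Fin (n + 1) →₀ ℕ | d 0 ≤ a ∧ ∑ i : Fin n, d i.succ ≤ b}.ncard =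
      (a + 1) * (b + n).choose n := by
  have eq_image : {d : Fin (n + 1) →₀ ℕ | d 0 ≤ a ∧ ∑ i : Fin n, d i.succ ≤ b} =
      Function.uncurry Finsupp.cons '' (Set.Iic a ×ˢ {e : Fin n →₀ ℕ | e.degree ≤ b}) := by
    ext d
    constructor
    · rintro ⟨h0, hsucc⟩
      have htail : d.tail.degree ≤ b := by
        simpa [Finsupp.degree_eq_sum, Finsupp.tail_apply] using hsucc
      exact ⟨(d 0, d.tail), ⟨h0, htail⟩, d.cons_tail⟩
    · rintro ⟨⟨j, e⟩, ⟨hj, he⟩, rfl⟩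
      simpa [Finsupp.degree_eq_sum] using And.intro hj he
  rw [eq_image, Set.ncard_image_of_injective _ Finsupp.cons_injective2.uncurry, Set.ncard_prod,
    ncard_setOf_degree_le, Fintype.card_fin, ← coe_Iic, Set.ncard_coe_finset, Nat.card_Iic]

theorem finrank_restrictBidegree (R : Type*) [CommSemiring R] [StrongRankCondition R]
    (n a b : ℕ) : finrank R (restrictBidegree R n a b) = (a + 1) * (b + n).choose n :=
  (finrank_restrictSupport _).trans (ncard_setOf_bidegree_le n a b)

theorem succ_pow_div_factorial_le_choose (α : Type*) [Semifield α] [LinearOrder α]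
    [IsStrictOrderedRing α] (n b : ℕ) :
    ((b : α) + 1) ^ n / n.factorial ≤ (b + n).choose n := by
  simpa [show b + n + 1 - n = b + 1 by omega] using Nat.pow_le_choose (α := α) n (b + n)

theorem exists_auxiliary_polynomial_general {R : Type*} [CommRing R] [Nontrivial R] {n : ℕ}
    (φ : MvPolynomial (Fin (n + 1)) R →ₗ[R] R⟦X⟧) (a b : ℕ) :
    ∃ Q : MvPolynomial (Fin (n + 1)) R, Q ≠ 0 ∧ Q.degreeOf 0 ≤ a ∧ degInX Q ≤ b ∧
      (((a + 1) * (b + n).choose n - 1 : ℕ) : ℕ∞) ≤ (φ Q).order ∧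
      ∀ m : ℕ, (m : ℝ) ≤ (a + 1) * (b + 1) ^ n / (n.factorial : ℝ) - 2 →
        (m : ℕ∞) < (φ Q).order := by
  have dim_pos : 0 < (a + 1) * (b + n).choose n :=
    Nat.mul_pos a.succ_pos (Nat.choose_pos (Nat.le_add_left n b))
  obtain ⟨⟨Q, hQ⟩, Q_ne_zero, le_order⟩ := exists_ne_zero_le_order_of_lt_finrank
    (φ ∘ₗ (restrictBidegree R n a b).subtype)
    ((Nat.sub_one_lt_of_lt dim_pos).trans_eq (finrank_restrictBidegree R n a b).symm)
  obtain ⟨degree_Z, degree_X⟩ := mem_restrictBidegree.mp hQ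
  refine ⟨Q, fun h ↦ Q_ne_zero (Subtype.ext h), degree_Z, degree_X, le_order,
    fun m hm ↦ lt_of_lt_of_le ?_ le_order⟩
  have add_two_le : ((m + 2 : ℕ) : ℝ) ≤ ((a + 1) * (b + n).choose n : ℕ) := by
    push_cast
    calc (m : ℝ) + 2 ≤ (a + 1) * ((b + 1) ^ n / n.factorial) := by
          rw [← mul_div_assoc]
          linarith
      _ ≤ (a + 1) * (b + n).choose n := by
          gcongr
          exact succ_pow_div_factorial_le_choose ℝ n b
  exact_mod_cast Nat.lt_sub_of_add_lt (Nat.cast_le.mp add_two_le)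

/-- The auxiliary-polynomial construction: given power series `f₁, …, fₙ` over a field `𝕜`
and bounds `X, Y`, there is a nonzero polynomial `Q ∈ 𝕜[Z, X₁, …, Xₙ]` with `deg_Z Q ≤ X`,
total degree at most `Y` in `X₁, …, Xₙ`, and
`ord_{z=0} Q(z, f₁(z), …, fₙ(z)) ≥ (X+1)·C(Y+n, n) − 1 > (X+1)(Y+1)^n/n! − 2`. -/
theorem exists_auxiliary_polynomial (𝕜 : Type*) [Field 𝕜] (n : ℕ) (hn : 1 ≤ n)
    (f : Fin n → PowerSeries 𝕜) (X Y : ℕ) :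
    ∃ Q : MvPolynomial (Fin (n + 1)) 𝕜, Q ≠ 0 ∧
      Q.degreeOf 0 ≤ X ∧ degInX Q ≤ Y ∧
      (((X + 1) * (Y + n).choose n - 1 : ℕ) : ℕ∞) ≤
        (MvPolynomial.aeval (Fin.cases PowerSeries.X f) Q).order ∧
      ∀ m : ℕ, (m : ℝ) ≤ (X + 1) * (Y + 1) ^ n / (n.factorial : ℝ) - 2 →
        (m : ℕ∞) < (MvPolynomial.aeval (Fin.cases PowerSeries.X f) Q).order :=
  exists_auxiliary_polynomial_general
    (aeval (Fin.cases PowerSeries.X f)).toLinearMap X Y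
end

section
/- Let 𝕜 be a field, n ≥ 1, and f_1, …, f_n ∈ 𝕜[[z]] formal power series such that z, f_1, …, f_n are algebraically independent over 𝕜 (as elements of 𝕜[[z]]). Suppose F : ℕ × ℕ → ℝ satisfies the multiplicity estimate: for every nonzero polynomial P ∈ 𝕜[Z, X_1, …, X_n] one has ord_{z=0} P(z, f_1(z), …, f_n(z)) < F(deg_Z P, deg_X P), where deg_X P denotes the total degree of P in X_1, …, X_n. Then for all X, Y ∈ ℕ one has F(X, Y) > (X+1)·binom(Y+n, n) − 1, and in particular F(X, Y) > (X+1)(Y+1)^n/n! − 1. -/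
open scoped BigOperators

/-!
The monomials of degree at most `A` in `Z` and at most `B` in `X₁, …, Xₙ` number
`N = (A + 1) * (B + n).choose n`, so some nonzero combination `P` of them satisfies the `N - 1`
linear conditions that the coefficients of `z⁰, …, z^(N-2)` in `P(z, f₁, …, fₙ)` vanish.
Multiplying `P` by a monomial brings its degrees to exactly `A` and `B` and does not lower the
order.
-/

open Finset MvPolynomial

section WeightedDegree

variable {σ R : Type*} [CommSemiring R]

lemma weightedTotalDegree_mul_monomial_one (w : σ → ℕ) {P : MvPolynomial σ R} (hP : P ≠ 0)
    (e : σ →₀ ℕ) :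
    weightedTotalDegree w (P * monomial e 1) =
      weightedTotalDegree w P + Finsupp.weight w e := by
  have hsupp : (P * monomial e 1).support = P.support.map (addRightEmbedding e) :=
    AddMonoidAlgebra.support_coeff_mul_single P 1 (by simp) e
  simp only [weightedTotalDegree, hsupp, sup_map, Finset.sup_add (support_nonempty.mpr hP)]
  exact sup_congr rfl fun d _ ↦ map_add (Finsupp.weight w) d e

lemma degreeOf_mul_monomial_one (i : σ) {P : MvPolynomial σ R} (hP : P ≠ 0) (e : σ →₀ ℕ) :
    degreeOf i (P * monomial e 1) = degreeOf i P + e i := by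
  classical
  simpa only [weightedTotalDegree_piSingle, Finsupp.weight_single_one_apply] using
    weightedTotalDegree_mul_monomial_one (Pi.single i 1) hP e

end WeightedDegree

section DegInX

variable {R : Type*} [CommRing R] {n : ℕ}

lemma weight_cons_zero_one (d : Fin (n + 1) →₀ ℕ) :
    Finsupp.weight (Fin.cons 0 1 : Fin (n + 1) → ℕ) d = ∑ i : Fin n, d i.succ := by
  simp [Finsupp.weight_eq_sum, Fin.sum_univ_succ]

lemma degInX_eq_weightedTotalDegree (P : MvPolynomial (Fin (n + 1)) R) :
    degInX P = weightedTotalDegree (Fin.cons 0 1 : Fin (n + 1) → ℕ) P := by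
  simp only [degInX, weightedTotalDegree, weight_cons_zero_one]

lemma degInX_mul_monomial_one {P : MvPolynomial (Fin (n + 1)) R} (hP : P ≠ 0)
    (e : Fin (n + 1) →₀ ℕ) :
    degInX (P * monomial e 1) = degInX P + ∑ i : Fin n, e i.succ := by
  rw [degInX_eq_weightedTotalDegree, degInX_eq_weightedTotalDegree,
    weightedTotalDegree_mul_monomial_one _ hP, weight_cons_zero_one]

lemma exists_mul_monomial_one_degreeOf_eq_degInX_eq (hn : 0 < n)
    {P : MvPolynomial (Fin (n + 1)) R} (hP : P ≠ 0) {A B : ℕ}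
    (hA : degreeOf 0 P ≤ A) (hB : degInX P ≤ B) :
    ∃ e, degreeOf 0 (P * monomial e 1) = A ∧ degInX (P * monomial e 1) = B := by
  refine ⟨Finsupp.cons (A - degreeOf 0 P) (Finsupp.single ⟨0, hn⟩ (B - degInX P)), ?_, ?_⟩
  · rw [degreeOf_mul_monomial_one 0 hP, Finsupp.cons_zero, Nat.add_sub_cancel' hA]
  · simp only [degInX_mul_monomial_one hP, Finsupp.cons_succ, Finsupp.univ_sum_single_apply,
      Nat.add_sub_cancel' hB]

end DegInX

section MonomialCount

/-- The exponent vectors of total degree at most `B` in the variables indexed by `ι`. -/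
def exponentsDegreeLE (ι : Type*) [Fintype ι] [DecidableEq ι] (B : ℕ) : Finset (ι →₀ ℕ) :=
  (range (B + 1)).biUnion (finsuppAntidiag univ)

lemma mem_exponentsDegreeLE {ι : Type*} [Fintype ι] [DecidableEq ι] {B : ℕ} {d : ι →₀ ℕ} :
    d ∈ exponentsDegreeLE ι B ↔ ∑ i, d i ≤ B := by
  simp [exponentsDegreeLE]

lemma card_exponentsDegreeLE (ι : Type*) [Fintype ι] [DecidableEq ι] (B : ℕ) :
    #(exponentsDegreeLE ι B) = (B + Fintype.card ι).choose (Fintype.card ι) := by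
  have hdisj : (range (B + 1) : Set ℕ).PairwiseDisjoint
      (finsuppAntidiag (univ : Finset ι) : ℕ → Finset (ι →₀ ℕ)) := fun k _ l _ hkl ↦
    disjoint_left.mpr fun d hk hl ↦
      hkl ((mem_finsuppAntidiag.mp hk).1.symm.trans (mem_finsuppAntidiag.mp hl).1)
  calc #(exponentsDegreeLE ι B)
      = ∑ k ∈ range (B + 1), (Fintype.card ι).multichoose k := by
        simp only [exponentsDegreeLE, card_biUnion hdisj,
          card_finsuppAntidiag_nat_eq_multichoose, card_univ]
    _ = (B + Fintype.card ι).choose (Fintype.card ι) := Nat.sum_range_multichoose B _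

/-- The exponents of the monomials in `Z, X₁, …, Xₙ` of degree at most `A` in `Z` and at most `B`
in `X₁, …, Xₙ`, with the index `0` standing for `Z` as in `degInX`. -/
noncomputable def exponentsBidegreeLE (n A B : ℕ) : Finset (Fin (n + 1) →₀ ℕ) :=
  image₂ Finsupp.cons (range (A + 1)) (exponentsDegreeLE (Fin n) B)

lemma mem_exponentsBidegreeLE {n A B : ℕ} {d : Fin (n + 1) →₀ ℕ} :
    d ∈ exponentsBidegreeLE n A B ↔ d 0 ≤ A ∧ ∑ i : Fin n, d i.succ ≤ B := by
  simp only [exponentsBidegreeLE, mem_image₂, mem_range, Nat.lt_succ_iff, mem_exponentsDegreeLE]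
  constructor
  · rintro ⟨a, ha, e, he, rfl⟩
    simpa using ⟨ha, he⟩
  · rintro ⟨hA, hB⟩
    exact ⟨d 0, hA, d.tail, hB, d.cons_tail⟩

lemma card_exponentsBidegreeLE (n A B : ℕ) :
    #(exponentsBidegreeLE n A B) = (A + 1) * (B + n).choose n := by
  rw [exponentsBidegreeLE, card_image₂ Finsupp.cons_injective2, card_range,
    card_exponentsDegreeLE, Fintype.card_fin]

end MonomialCount

lemma exists_ne_zero_map_eq_zero_of_finrank_lt {R M N : Type*} [Ring R] [StrongRankCondition R]
    [AddCommGroup M] [Module R M] [AddCommGroup N] [Module R N] [Module.Finite R N] (φ : M →ₗ[R] N)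
    (h : Module.finrank R N < Module.finrank R M) : ∃ x ≠ 0, φ x = 0 := by
  by_contra! hφ
  have hinj : Function.Injective φ :=
    (injective_iff_map_eq_zero φ).mpr fun x ↦ not_imp_not.mp (hφ x)
  exact h.not_ge (LinearMap.finrank_le_finrank_of_injective hinj)

section AuxiliaryPolynomial

variable {R : Type*} [CommRing R] [Nontrivial R]

lemma exists_ne_zero_support_subset_le_order_aeval {σ : Type*} (g : σ → PowerSeries R)
    {S : Finset (σ →₀ ℕ)} {m : ℕ} (hm : m < #S) :
    ∃ P : MvPolynomial σ R, P ≠ 0 ∧ P.support ⊆ S ∧ (m : ℕ∞) ≤ (aeval g P).order := by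
  let φ : restrictSupport R (S : Set (σ →₀ ℕ)) →ₗ[R] Fin m → R :=
    LinearMap.pi fun j ↦
      PowerSeries.coeff (j : ℕ) ∘ₗ (aeval g).toLinearMap ∘ₗ Submodule.subtype _
  have hrank : Module.finrank R (Fin m → R) <
      Module.finrank R (restrictSupport R (S : Set (σ →₀ ℕ))) := by
    simpa [Module.finrank_eq_card_basis (basisRestrictSupport R (S : Set (σ →₀ ℕ)))] using hm
  obtain ⟨P, hP, hφP⟩ := exists_ne_zero_map_eq_zero_of_finrank_lt φ hrank
  exact ⟨P, Subtype.coe_ne_coe.mpr hP, coe_subset.mp P.2,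
    PowerSeries.nat_le_order _ _ fun j hj ↦ congrFun hφP ⟨j, hj⟩⟩

lemma exists_ne_zero_degreeOf_le_degInX_le_le_order_aeval {n : ℕ}
    (g : Fin (n + 1) → PowerSeries R) (A B : ℕ) {m : ℕ} (hm : m < (A + 1) * (B + n).choose n) :
    ∃ P : MvPolynomial (Fin (n + 1)) R, P ≠ 0 ∧ degreeOf 0 P ≤ A ∧ degInX P ≤ B ∧
      (m : ℕ∞) ≤ (aeval g P).order := by
  rw [← card_exponentsBidegreeLE] at hm
  obtain ⟨P, hP, hsupp, hord⟩ := exists_ne_zero_support_subset_le_order_aeval g hm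
  have hdeg : ∀ d ∈ P.support, d 0 ≤ A ∧ ∑ i : Fin n, d i.succ ≤ B :=
    fun d hd ↦ mem_exponentsBidegreeLE.mp (hsupp hd)
  exact ⟨P, hP, degreeOf_le_iff.mpr fun d hd ↦ (hdeg d hd).1,
    Finset.sup_le fun d hd ↦ (hdeg d hd).2, hord⟩

lemma exists_ne_zero_degreeOf_eq_degInX_eq_le_order_aeval {n : ℕ} (hn : 0 < n)
    (g : Fin (n + 1) → PowerSeries R) (A B : ℕ) {m : ℕ} (hm : m < (A + 1) * (B + n).choose n) :
    ∃ P : MvPolynomial (Fin (n + 1)) R, P ≠ 0 ∧ degreeOf 0 P = A ∧ degInX P = B ∧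
      (m : ℕ∞) ≤ (aeval g P).order := by
  obtain ⟨P, hP, hA, hB, hord⟩ := exists_ne_zero_degreeOf_le_degInX_le_le_order_aeval g A B hm
  obtain ⟨e, heA, heB⟩ := exists_mul_monomial_one_degreeOf_eq_degInX_eq hn hP hA hB
  refine ⟨P * monomial e 1, ?_, heA, heB, ?_⟩
  · exact isRegular_one.monomial.right.mul_right_eq_zero_iff.not.mpr hP
  · calc (m : ℕ∞) ≤ (aeval g P).order := hord
      _ ≤ (aeval g P).order + (aeval g (monomial e (1 : R))).order := le_self_add
      _ ≤ (aeval g (P * monomial e 1)).order := by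
        rw [map_mul]
        exact PowerSeries.le_order_mul _ _

end AuxiliaryPolynomial

lemma add_one_pow_div_factorial_le_choose (n B : ℕ) :
    ((B : ℝ) + 1) ^ n / n.factorial ≤ (B + n).choose n := by
  simpa [Nat.add_right_comm B n 1] using Nat.pow_le_choose (α := ℝ) n (B + n)

theorem multiplicity_bound_lower_estimate_general {R : Type*} [CommRing R] [Nontrivial R] {n : ℕ}
    (hn : 1 ≤ n) (g : Fin (n + 1) → PowerSeries R) (F : ℕ × ℕ → ℝ)
    (hF : ∀ P : MvPolynomial (Fin (n + 1)) R, P ≠ 0 →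
      ∀ m : ℕ, (m : ℕ∞) ≤ (aeval g P).order → (m : ℝ) < F (P.degreeOf 0, degInX P))
    (A B : ℕ) :
    ((A + 1) * (B + n).choose n : ℝ) - 1 < F (A, B) ∧
      (A + 1) * (B + 1) ^ n / (n.factorial : ℝ) - 1 < F (A, B) := by
  have hpos : 0 < (A + 1) * (B + n).choose n :=
    Nat.mul_pos A.succ_pos (Nat.choose_pos (Nat.le_add_left n B))
  obtain ⟨P, hP, rfl, rfl, hord⟩ :=
    exists_ne_zero_degreeOf_eq_degInX_eq_le_order_aeval hn g A B (Nat.sub_one_lt_of_lt hpos)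
  have hbinom : ((degreeOf 0 P + 1) * (degInX P + n).choose n : ℝ) - 1 <
      F (degreeOf 0 P, degInX P) := by
    simpa [Nat.cast_pred hpos] using hF P hP _ hord
  refine ⟨hbinom, lt_of_le_of_lt ?_ hbinom⟩
  rw [mul_div_assoc]
  gcongr
  exact add_one_pow_div_factorial_le_choose n (degInX P)

/-- Lower bound for any multiplicity-estimate bound: if `z, f₁, …, fₙ` are algebraically
independent over `𝕜` and `F : ℕ × ℕ → ℝ` satisfies
`ord_{z=0} P(z, f₁, …, fₙ) < F (deg_Z P, deg_X P)` for every nonzero polynomial `P`, then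
`F (X, Y) > (X+1)·C(Y+n, n) − 1 ≥ (X+1)(Y+1)^n/n! − 1` for all `X, Y`. -/
theorem multiplicity_bound_lower_estimate (𝕜 : Type*) [Field 𝕜] (n : ℕ) (hn : 1 ≤ n)
    (f : Fin n → PowerSeries 𝕜)
    (hindep : AlgebraicIndependent 𝕜
      (Fin.cases PowerSeries.X f : Fin (n + 1) → PowerSeries 𝕜))
    (F : ℕ × ℕ → ℝ)
    (hF : ∀ P : MvPolynomial (Fin (n + 1)) 𝕜, P ≠ 0 →
      ∀ m : ℕ, (m : ℕ∞) ≤ (MvPolynomial.aeval (Fin.cases PowerSeries.X f) P).order →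
        (m : ℝ) < F (P.degreeOf 0, degInX P)) :
    ∀ X Y : ℕ,
      ((X + 1) * (Y + n).choose n : ℝ) - 1 < F (X, Y) ∧
      (X + 1) * (Y + 1) ^ n / (n.factorial : ℝ) - 1 < F (X, Y) :=
  multiplicity_bound_lower_estimate_general hn _ F hF
end

section
/- Let 𝕜 be a field, n ≥ 1, f_1, …, f_n ∈ 𝕜[[z]] formal power series, and let t be the transcendence degree of the field 𝕜(z)(f_1, …, f_n) over 𝕜(z) (computed inside 𝕜((z))). For all a, b ∈ ℕ there exists a polynomial P ∈ 𝕜[z][X_1, …, X_n] with deg_z P ≤ a, total degree in X_1, …, X_n at most b, such that P(z, f_1(z), …, f_n(z)) ≠ 0 and ord_{z=0} P(z, f_1, …, f_n) ≥ (a+1)·binom(b+t, t) − 1; since (a+1)·binom(b+t, t) ≥ (a+1)(b+1)^t/t!, this order is in particular > (a+1)(b+1)^t/t! − 2. -/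
/-!
Polynomials of degree at most `a` in `z` and at most `b` in `t` further variables form a space of
dimension `N = (a + 1) * (b + t).choose t`. Evaluation at `t + 1` algebraically independent series
is injective, so it maps this space onto an `N`-dimensional space of power series, and the
vanishing of the first `N - 1` coefficients cannot cut that space down to zero. The nonvanishing
of the resulting value is therefore automatic.
-/

open scoped BigOperators

/-- The family consisting of the series `z` together with the series `fⱼ`, `j ∈ s`.
Its algebraic independence over `𝕜` expresses the algebraic independence of the `fⱼ`,
`j ∈ s`, over `𝕜(z)`. -/
noncomputable def familyWithZ {𝕜 : Type*} [Field 𝕜] {n : ℕ} (f : Fin n → PowerSeries 𝕜)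
    (s : Finset (Fin n)) : Option {j // j ∈ s} → PowerSeries 𝕜 :=
  fun o => o.elim PowerSeries.X fun j => f j.1

open MvPolynomial PowerSeries

section ExponentCount

variable (σ : Type*) [Fintype σ]

lemma card_finsupp_degree_le (b : ℕ) :
    Nat.card {d : σ →₀ ℕ // d.degree ≤ b} =
      (b + Fintype.card σ).choose (Fintype.card σ) := by
  classical
  let layer : ℕ → Finset (σ →₀ ℕ) := Finset.univ.finsuppAntidiag
  have mem_layers (d : σ →₀ ℕ) :
      d ∈ (Finset.range (b + 1)).biUnion layer ↔ d.degree ≤ b := by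
    simp [layer, Finsupp.degree_eq_sum]
  have layers_disjoint : Pairwise (Function.onFun Disjoint layer) := fun i j hij =>
    Finset.disjoint_left.2 fun d hi hj => hij <|
      (Finset.mem_finsuppAntidiag.1 hi).1.symm.trans (Finset.mem_finsuppAntidiag.1 hj).1
  calc Nat.card {d : σ →₀ ℕ // d.degree ≤ b}
      = ((Finset.range (b + 1)).biUnion layer).card := Nat.subtype_card _ mem_layers
    _ = ∑ k ∈ Finset.range (b + 1), (Fintype.card σ).multichoose k := by
      rw [Finset.card_biUnion fun i _ j _ hij => layers_disjoint hij]
      simp only [layer, Finset.card_finsuppAntidiag_nat_eq_multichoose, Finset.card_univ]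
    _ = (b + Fintype.card σ).choose (Fintype.card σ) := by
      rw [Nat.sum_range_multichoose, add_comm, Nat.choose_symm_add]

lemma card_finsupp_option_bidegree_le (a b : ℕ) :
    Nat.card {d : Option σ →₀ ℕ // d none ≤ a ∧ d.some.degree ≤ b} =
      (a + 1) * (b + Fintype.card σ).choose (Fintype.card σ) := by
  let split : {d : Option σ →₀ ℕ // d none ≤ a ∧ d.some.degree ≤ b} ≃
      {i : ℕ // i ≤ a} × {d : σ →₀ ℕ // d.degree ≤ b} :=
    (Finsupp.optionEquiv.subtypeEquiv
      (q := fun p : ℕ × (σ →₀ ℕ) => p.1 ≤ a ∧ p.2.degree ≤ b) fun _ => Iff.rfl).trans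
      (Equiv.subtypeProdEquivProd (p := (· ≤ a)) (q := (Finsupp.degree · ≤ b)))
  have card_le : Nat.card {i : ℕ // i ≤ a} = a + 1 := by
    simpa using Nat.subtype_card (Finset.Iic a) (p := (· ≤ a)) (by simp)
  rw [Nat.card_congr split, Nat.card_prod, card_le, card_finsupp_degree_le]

end ExponentCount

section BidegreeLE

/-- The polynomials in `R[z, Xⱼ : j ∈ σ]` of degree at most `a` in `z` and of total degree at
most `b` in the `Xⱼ`; the variable `z` is indexed by `none` and `Xⱼ` by `some j`. -/
noncomputable def bidegreeLE (R σ : Type*) [CommSemiring R] (a b : ℕ) :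
    Submodule R (MvPolynomial (Option σ) R) :=
  restrictSupport R {d | d none ≤ a ∧ d.some.degree ≤ b}

lemma finrank_bidegreeLE (R σ : Type*) [CommSemiring R] [StrongRankCondition R] [Fintype σ]
    (a b : ℕ) :
    Module.finrank R (bidegreeLE R σ a b) =
      (a + 1) * (b + Fintype.card σ).choose (Fintype.card σ) :=
  (Module.finrank_eq_nat_card_basis (basisRestrictSupport R _)).trans
    (card_finsupp_option_bidegree_le σ a b)

/-- The renaming of variables `z ↦ z`, `Xⱼ ↦ X_{e j}` that turns polynomials indexed as in
`bidegreeLE` into polynomials indexed as in `degInX`. -/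
def toFinSucc {σ : Type*} {n : ℕ} (e : σ → Fin n) (o : Option σ) : Fin (n + 1) :=
  o.elim 0 fun j => (e j).succ

variable {R M σ : Type*} [AddCommMonoid M] {n a b : ℕ} (e : σ → Fin n)

lemma mapDomain_toFinSucc_zero (d : Option σ →₀ M) :
    d.mapDomain (toFinSucc e) 0 = d none := by
  induction d using Finsupp.induction_linear with
  | zero => simp
  | add d d' hd hd' => simp [Finsupp.mapDomain_add, hd, hd']
  | single o k => cases o <;> simp [toFinSucc, Finsupp.mapDomain_single]

lemma mapDomain_toFinSucc_succ (d : Option σ →₀ M) (i : Fin n) :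
    d.mapDomain (toFinSucc e) i.succ = d.some.mapDomain e i := by
  induction d using Finsupp.induction_linear with
  | zero => simp
  | add d d' hd hd' => simp [Finsupp.mapDomain_add, hd, hd']
  | single o k => cases o <;> simp [toFinSucc, Finsupp.mapDomain_single, Finsupp.single_apply]

lemma sum_mapDomain_toFinSucc_succ (d : Option σ →₀ M) :
    ∑ i : Fin n, d.mapDomain (toFinSucc e) i.succ = d.some.degree := by
  simp only [mapDomain_toFinSucc_succ, ← Finsupp.degree_eq_sum, Finsupp.degree_mapDomain]

lemma exists_mapDomain_eq_of_mem_support_rename {τ : Type*} [CommSemiring R] {φ : σ → τ}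
    {Q : MvPolynomial σ R} {d : τ →₀ ℕ} (hd : d ∈ (rename φ Q).support) :
    ∃ c ∈ Q.support, c.mapDomain φ = d := by
  obtain ⟨c, hc, hcQ⟩ := coeff_rename_ne_zero φ Q d (mem_support_iff.1 hd)
  exact ⟨c, mem_support_iff.2 hcQ, hc⟩

lemma degreeOf_zero_rename_toFinSucc_le [CommSemiring R] {Q : MvPolynomial (Option σ) R}
    (hQ : Q ∈ bidegreeLE R σ a b) : (rename (toFinSucc e) Q).degreeOf 0 ≤ a := by
  refine (degreeOf_le_iff).2 fun d hd => ?_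
  obtain ⟨c, hc, rfl⟩ := exists_mapDomain_eq_of_mem_support_rename hd
  exact (mapDomain_toFinSucc_zero e c).trans_le (hQ hc).1

lemma degInX_rename_toFinSucc_le [CommRing R] {Q : MvPolynomial (Option σ) R}
    (hQ : Q ∈ bidegreeLE R σ a b) : degInX (rename (toFinSucc e) Q) ≤ b := by
  refine Finset.sup_le fun d hd => ?_
  obtain ⟨c, hc, rfl⟩ := exists_mapDomain_eq_of_mem_support_rename hd
  exact (sum_mapDomain_toFinSucc_succ e c).trans_le (hQ hc).2

end BidegreeLE

section Order

variable {𝕜 : Type*} [Field 𝕜]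

lemma exists_mem_ne_zero_le_order_of_lt_finrank {V : Submodule 𝕜 𝕜⟦X⟧} {m : ℕ}
    (hm : m < Module.finrank 𝕜 V) : ∃ g ∈ V, g ≠ 0 ∧ (m : ℕ∞) ≤ g.order := by
  have : Module.Finite 𝕜 V := Module.finite_of_finrank_pos (Nat.zero_lt_of_lt hm)
  let firstCoeffs : V →ₗ[𝕜] Fin m → 𝕜 :=
    (LinearMap.pi fun k : Fin m => PowerSeries.coeff (k : ℕ)) ∘ₗ V.subtype
  have ker_ne_bot : firstCoeffs.ker ≠ ⊥ := LinearMap.ker_ne_bot_of_finrank_lt (by simpa using hm)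
  obtain ⟨g, hg, hg0⟩ := (Submodule.ne_bot_iff _).1 ker_ne_bot
  exact ⟨g, g.2, by simpa using hg0, nat_le_order _ _ fun k hk => congrFun hg ⟨k, hk⟩⟩

lemma exists_mem_aeval_ne_zero_le_order {ι : Type*} {g : ι → 𝕜⟦X⟧}
    (hg : AlgebraicIndependent 𝕜 g) {V : Submodule 𝕜 (MvPolynomial ι 𝕜)} {m : ℕ}
    (hm : m < Module.finrank 𝕜 V) :
    ∃ Q ∈ V, aeval g Q ≠ 0 ∧ (m : ℕ∞) ≤ (aeval g Q).order := by
  have finrank_eq : Module.finrank 𝕜 V = Module.finrank 𝕜 (V.map (aeval g).toLinearMap) :=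
    (V.equivMapOfInjective (aeval g).toLinearMap hg).finrank_eq
  obtain ⟨_, ⟨Q, hQ, rfl⟩, h0, hord⟩ :=
    exists_mem_ne_zero_le_order_of_lt_finrank (finrank_eq ▸ hm)
  exact ⟨Q, hQ, h0, hord⟩

end Order

lemma add_one_pow_div_factorial_le_choose_s10 (b t : ℕ) :
    ((b : ℝ) + 1) ^ t / t.factorial ≤ (b + t).choose t := by
  have h := Nat.pow_le_choose (α := ℝ) t (b + t)
  rwa [Nat.add_right_comm, Nat.add_sub_cancel, Nat.cast_add_one] at h

lemma lt_mul_choose_sub_one_of_le {a b t m : ℕ}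
    (hm : (m : ℝ) ≤ (a + 1) * (b + 1) ^ t / (t.factorial : ℝ) - 2) :
    m < (a + 1) * (b + t).choose t - 1 := by
  have le_dim : ((a : ℝ) + 1) * (b + 1) ^ t / t.factorial ≤ (a + 1) * (b + t).choose t := by
    rw [mul_div_assoc]
    gcongr
    exact add_one_pow_div_factorial_le_choose_s10 b t
  have add_two_le : (m : ℝ) + 2 ≤ (a + 1) * (b + t).choose t := by linarith
  have : m + 2 ≤ (a + 1) * (b + t).choose t := by exact_mod_cast add_two_le
  omega

lemma cases_X_comp_toFinSucc {𝕜 : Type*} [Field 𝕜] {n : ℕ} (f : Fin n → 𝕜⟦X⟧)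
    (s : Finset (Fin n)) :
    (Fin.cases PowerSeries.X f : Fin (n + 1) → 𝕜⟦X⟧) ∘ toFinSucc ((↑) : s → Fin n) =
      familyWithZ f s := by
  funext o
  cases o <;> rfl

theorem exists_auxiliary_polynomial_dependent_general {𝕜 : Type*} [Field 𝕜] {n : ℕ}
    (g : Fin (n + 1) → 𝕜⟦X⟧) (s : Finset (Fin n))
    (hindep : AlgebraicIndependent 𝕜 (g ∘ toFinSucc ((↑) : s → Fin n))) (a b : ℕ) :
    ∃ P : MvPolynomial (Fin (n + 1)) 𝕜,
      P.degreeOf 0 ≤ a ∧ degInX P ≤ b ∧ aeval g P ≠ 0 ∧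
      (((a + 1) * (b + s.card).choose s.card - 1 : ℕ) : ℕ∞) ≤ (aeval g P).order ∧
      ∀ m : ℕ, (m : ℝ) ≤ (a + 1) * (b + 1) ^ s.card / (s.card.factorial : ℝ) - 2 →
        (m : ℕ∞) < (aeval g P).order := by
  have lt_finrank : (a + 1) * (b + s.card).choose s.card - 1 <
      Module.finrank 𝕜 (bidegreeLE 𝕜 s a b) := by
    rw [finrank_bidegreeLE, Fintype.card_coe]
    exact Nat.sub_one_lt (Nat.mul_pos a.succ_pos (Nat.choose_pos (Nat.le_add_left _ _))).ne'
  obtain ⟨Q, hQ, hne, hord⟩ := exists_mem_aeval_ne_zero_le_order hindep lt_finrank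
  rw [← aeval_rename] at hne hord
  refine ⟨rename (toFinSucc ((↑) : s → Fin n)) Q, degreeOf_zero_rename_toFinSucc_le _ hQ,
    degInX_rename_toFinSucc_le _ hQ, hne, hord, fun m hm => ?_⟩
  have lt_dim := lt_mul_choose_sub_one_of_le hm
  exact (Nat.cast_lt.2 lt_dim).trans_le hord

/-- The auxiliary-polynomial construction for algebraically dependent functions
(the claim (ie_Qab) of the paper): if `t` is the transcendence degree of
`𝕜(z)(f₁, …, fₙ)` over `𝕜(z)` (witnessed by a maximal algebraically independent
subset `s` of the `fᵢ` of cardinality `t`), then for all `a, b ∈ ℕ` there is a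
polynomial `P ∈ 𝕜[z][X₁, …, Xₙ]` with `deg_z P ≤ a`, total degree in `X₁, …, Xₙ`
at most `b`, such that `P(z, f₁, …, fₙ) ≠ 0` and
`ord_{z=0} P(z, f₁, …, fₙ) ≥ (a+1)·C(b+t, t) − 1 > (a+1)(b+1)^t/t! − 2`. -/
theorem exists_auxiliary_polynomial_dependent (𝕜 : Type*) [Field 𝕜] (n : ℕ) (hn : 1 ≤ n)
    (f : Fin n → PowerSeries 𝕜)
    (t : ℕ) (s : Finset (Fin n)) (hcard : s.card = t)
    (hindep : AlgebraicIndependent 𝕜 (familyWithZ f s))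
    (hmax : ∀ j : Fin n, j ∉ s → ¬ AlgebraicIndependent 𝕜 (familyWithZ f (insert j s)))
    (a b : ℕ) :
    ∃ P : MvPolynomial (Fin (n + 1)) 𝕜,
      P.degreeOf 0 ≤ a ∧ degInX P ≤ b ∧
      MvPolynomial.aeval (Fin.cases PowerSeries.X f) P ≠ 0 ∧
      (((a + 1) * (b + t).choose t - 1 : ℕ) : ℕ∞) ≤
        (MvPolynomial.aeval (Fin.cases PowerSeries.X f) P).order ∧
      ∀ m : ℕ, (m : ℝ) ≤ (a + 1) * (b + 1) ^ t / (t.factorial : ℝ) - 2 →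
        (m : ℕ∞) < (MvPolynomial.aeval (Fin.cases PowerSeries.X f) P).order := by
  subst hcard
  rw [← cases_X_comp_toFinSucc] at hindep
  exact exists_auxiliary_polynomial_dependent_general _ s hindep a b
end
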